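/- Let H=(V_H,E_H) be a fixed graph with at least two edges, let P be a strict partial order on E_H, let ψ be a label multiplicity distribution, and set ρ_H = min over subgraphs I=(V_I,E_I) of H with at least two edges of |V_I|/(|E_I|−1). If δ:ℕ→(0,1) satisfies δ(n)·n^{ρ_H} → 0 as n→∞, then the probability that a random temporal graph drawn from Γ_{[n]}(ψ) contains (H,P) as a δ(n)-temporal motif tends to 0 as n→∞. -/

import Mathlib

open MeasureTheory ProbabilityTheory Filter Set
open scoped ENNReal NNReal Topology

noncomputable section

namespace RTG

/-- A temporal graph on vertex type `V`, given by the finite set of real time labels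
attached to each potential edge (unordered pair of vertices). -/
abbrev TGraph (V : Type*) := Sym2 V → Finset ℝ

/-- `P` is a strict partial order supported on the set `s`. -/
def StrictPartialOrderOn {α : Type*} (s : Set α) (P : α → α → Prop) : Prop :=
  (∀ a, ¬ P a a) ∧ (∀ a b c, P a b → P b c → P a c) ∧ ∀ a b, P a b → a ∈ s ∧ b ∈ s

/-- The temporal graph `Λ` contains `(H, P)` as a `δ`-temporal motif. -/
def Contains {VH V : Type*} (H : SimpleGraph VH) (P : Sym2 VH → Sym2 VH → Prop)
    (Λ : TGraph V) (δ : ℝ) : Prop :=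
  ∃ Φ : VH → V, Function.Injective Φ ∧
    ∃ lab : Sym2 VH → ℝ,
      (∀ e ∈ H.edgeSet, lab e ∈ Λ (Sym2.map Φ e)) ∧
      (∀ e f, P e f → lab e < lab f) ∧
      (∀ e ∈ H.edgeSet, ∀ f ∈ H.edgeSet, lab e - lab f < δ)

/-- The sparsity `ρ_H` of a graph `H`: the minimum over subgraphs with at least two
edges of `|V_I| / (|E_I| - 1)`. -/
def sparsity {VH : Type*} (H : SimpleGraph VH) : ℝ :=
  sInf {x : ℝ | ∃ I : H.Subgraph, 2 ≤ I.edgeSet.ncard ∧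
    x = (I.verts.ncard : ℝ) / ((I.edgeSet.ncard : ℝ) - 1)}

/-- The space of label data on a single edge: a number `k` of labels together with the
tuple of `k` label values (indexed in order of sampling). -/
abbrev LabelSpace := Σ k : ℕ, Fin k → ℝ

/-- The uniform distribution on `(0, 1]`. -/
def unif01 : Measure ℝ := volume.restrict (Set.Ioc 0 1)

/-- The uniform distribution on `{1, …, T}` (as a measure on `ℝ`). -/
def unifDisc (T : ℕ) : Measure ℝ :=
  (T : ℝ≥0∞)⁻¹ • ∑ k ∈ Finset.Icc 1 T, Measure.dirac (k : ℝ)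

/-- The distribution of the label data of a single edge: the number of labels is drawn
according to `ψ` and, independently, each label value is drawn according to `ν`. -/
def edgeMeasure (ν : Measure ℝ) (ψ : Measure ℕ) : Measure LabelSpace :=
  Measure.sum fun k => ψ {k} • (Measure.pi fun _ : Fin k => ν).map (Sigma.mk k)

/-- The doubly random temporal graph model on vertex set `V` with label value
distribution `ν` and label multiplicity distribution `ψ`: all edges receive independent
identically distributed label data. -/
def model (V : Type*) [Fintype V] [DecidableEq V] (ν : Measure ℝ) (ψ : Measure ℕ) :
    Measure (Sym2 V → LabelSpace) :=
  Measure.pi fun _ : Sym2 V => edgeMeasure ν ψ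

/-- The continuous doubly random temporal graph `Γ_V(ψ)`. -/
abbrev contModel (V : Type*) [Fintype V] [DecidableEq V] (ψ : Measure ℕ) :
    Measure (Sym2 V → LabelSpace) := model V unif01 ψ

/-- The discrete doubly random temporal graph `Γ_V(ψ, T)`. -/
abbrev discModel (V : Type*) [Fintype V] [DecidableEq V] (ψ : Measure ℕ) (T : ℕ) :
    Measure (Sym2 V → LabelSpace) := model V (unifDisc T) ψ

/-- The temporal graph determined by a sample `ω` of the model: each non-loop edge
carries the sampled set of labels. -/
def toTGraph {V : Type*} [DecidableEq V] (ω : Sym2 V → LabelSpace) : TGraph V :=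
  fun e => if e.IsDiag then ∅ else Finset.image (ω e).2 Finset.univ

/-- The `T`-discretization of a temporal graph: each label `l` is replaced by `⌈T·l⌉`. -/
def discretize {V : Type*} (T : ℕ) (Λ : TGraph V) : TGraph V :=
  fun e => (Λ e).image fun l => ((⌈(T : ℝ) * l⌉ : ℤ) : ℝ)

/-- `ψ` is a label multiplicity distribution: a probability distribution on `ℕ` with
positive finite mean and finite second moment. -/
def IsLMD (ψ : Measure ℕ) : Prop :=
  IsProbabilityMeasure ψ ∧ Integrable (fun k : ℕ => (k : ℝ)) ψ ∧
    Integrable (fun k : ℕ => (k : ℝ) ^ 2) ψ ∧ 0 < ∫ k, (k : ℝ) ∂ψ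

/-- The mean `r` of a label multiplicity distribution. -/
def lmdMean (ψ : Measure ℕ) : ℝ := ∫ k, (k : ℝ) ∂ψ

/-- The second moment `r₂` of a label multiplicity distribution. -/
def lmdSq (ψ : Measure ℕ) : ℝ := ∫ k, (k : ℝ) ^ 2 ∂ψ

/-- `q = P[Q > 0]` for a label multiplicity distribution. -/
def lmdPos (ψ : Measure ℕ) : ℝ := (ψ {k | 0 < k}).toReal

/-- `v` is reachable from the set `S` by time `t` in the temporal graph `Λ`. -/
def ReachBy {V : Type*} (Λ : TGraph V) (S : Set V) (t : ℝ) (v : V) : Prop :=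
  v ∈ S ∨ ∃ (k : ℕ) (f : ℕ → V) (ts : ℕ → ℝ), 0 < k ∧ f 0 ∈ S ∧ f k = v ∧
    (∀ i < k, ts i ∈ Λ s(f i, f (i + 1))) ∧
    (∀ i j, i < j → j < k → ts i < ts j) ∧ ts (k - 1) ≤ t

/-- The reachability ball `B_Λ(S, t)`. -/
def ball {V : Type*} (Λ : TGraph V) (S : Set V) (t : ℝ) : Set V := {v | ReachBy Λ S t v}

/-- The doubling time of the set `S` in `Λ` (with value `∞` if the reachability ball
never doubles in size). -/
def doubleTime {V : Type*} (Λ : TGraph V) (S : Set V) : ℝ≥0∞ :=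
  ⨅ (t : ℝ) (_ : 0 ≤ t ∧ 2 * S.ncard ≤ (ball Λ S t).ncard), ENNReal.ofReal t

/-- The doubling time of the temporal graph `Λ`: the maximum doubling time over all
nonempty vertex sets of size at most half the number of vertices. -/
def doubleAll {V : Type*} [Fintype V] (Λ : TGraph V) : ℝ≥0∞ :=
  ⨆ (S : Set V) (_ : S.Nonempty ∧ 2 * S.ncard ≤ Fintype.card V), doubleTime Λ S

/-- `Double⁻`: the maximum doubling time over nonempty sets of size at most `n/4`. -/
def doubleSmall {V : Type*} [Fintype V] (Λ : TGraph V) : ℝ≥0∞ :=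
  ⨆ (S : Set V) (_ : S.Nonempty ∧ 4 * S.ncard ≤ Fintype.card V), doubleTime Λ S

/-- `Double⁺`: the maximum doubling time over sets of size in `(n/4, n/2]`. -/
def doubleLarge {V : Type*} [Fintype V] (Λ : TGraph V) : ℝ≥0∞ :=
  ⨆ (S : Set V) (_ : Fintype.card V < 4 * S.ncard ∧ 2 * S.ncard ≤ Fintype.card V),
    doubleTime Λ S

/-- The partial reversal `ℛ(Λ, t)`: every label `l < t` is replaced by `t - l`. -/
def reverse {V : Type*} (Λ : TGraph V) (t : ℝ) : TGraph V :=
  fun e => (Λ e).image fun l => if l < t then t - l else l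

/-- The rank of a time `x` among all the labels of the sample `ω`: the number of labels
(on genuine, non-loop, edges) that are at most `x`. -/
def rank {V : Type*} [Fintype V] [DecidableEq V] (ω : Sym2 V → LabelSpace) (x : ℝ) : ℕ :=
  ∑ e ∈ Finset.univ.filter (fun e : Sym2 V => ¬ e.IsDiag),
    Nat.card {i : Fin (ω e).1 // (ω e).2 i ≤ x}

/-- The order discretization `𝒢^O` of the sample `ω`: each label is replaced by its rank
among all labels. -/
def orderDisc {V : Type*} [Fintype V] [DecidableEq V] (ω : Sym2 V → LabelSpace) :
    TGraph V :=
  fun e => if e.IsDiag then ∅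
    else Finset.image (fun i => (rank ω ((ω e).2 i) : ℝ)) Finset.univ


/-!
A first moment argument on the subgraph `I` of `H` that attains the sparsity, with `v`
vertices and `m + 1` edges. A `δ`-temporal copy of `H` restricts to one of `I`, whose labels differ
by less than `δ` and hence all lie in one of the windows `[kδ, (k + 2)δ)`. For a fixed embedding of
`I`, independence of the edges bounds the probability of this by the sum over `k` of
`(r ν[kδ, (k + 2)δ)) ^ (m + 1)`, where `r` is the mean multiplicity and `ν` the label distribution.
Each window has measure `O(δ)` as soon as `ν` has bounded density, and the measures of all windows
add up to `2`, so the sum is `O(δ ^ m)`. There are at most `n ^ v` embeddings, and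
`n ^ v δ ^ m = (δ n ^ ρ) ^ m` since `ρ = v / m`.
-/

/-- The event that the label data of an edge contains a label in `J`. -/
def hasLabelIn (J : Set ℝ) : Set LabelSpace := {x | ∃ i, x.2 i ∈ J}

lemma measurableSet_labelSpace_iff {s : Set LabelSpace} :
    MeasurableSet s ↔ ∀ k, MeasurableSet {x : Fin k → ℝ | ⟨k, x⟩ ∈ s} := by
  rw [Sigma.instMeasurableSpace, MeasurableSpace.measurableSet_iInf]
  rfl

lemma setOf_mk_mem_hasLabelIn (J : Set ℝ) (k : ℕ) :
    {x : Fin k → ℝ | ⟨k, x⟩ ∈ hasLabelIn J} = ⋃ i, Function.eval i ⁻¹' J := by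
  ext x
  simp [hasLabelIn]

lemma measurableSet_hasLabelIn {J : Set ℝ} (hJ : MeasurableSet J) :
    MeasurableSet (hasLabelIn J) := by
  refine measurableSet_labelSpace_iff.2 fun k => ?_
  rw [setOf_mk_mem_hasLabelIn]
  exact .iUnion fun i => measurable_pi_apply i hJ

lemma edgeMeasure_apply (ν : Measure ℝ) (ψ : Measure ℕ) {s : Set LabelSpace}
    (hs : MeasurableSet s) :
    edgeMeasure ν ψ s = ∫⁻ k, Measure.pi (fun _ : Fin k => ν) {x | ⟨k, x⟩ ∈ s} ∂ψ := by
  have measurable_mk (k : ℕ) : Measurable (Sigma.mk (β := fun j : ℕ => Fin j → ℝ) k) :=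
    fun _ ht => measurableSet_labelSpace_iff.1 ht k
  rw [edgeMeasure, Measure.sum_apply _ hs, lintegral_countable']
  refine tsum_congr fun k => ?_
  rw [Measure.smul_apply, Measure.map_apply (measurable_mk k) hs, smul_eq_mul, mul_comm]
  rfl

instance isProbabilityMeasure_edgeMeasure (ν : Measure ℝ) [IsProbabilityMeasure ν]
    (ψ : Measure ℕ) [IsProbabilityMeasure ψ] : IsProbabilityMeasure (edgeMeasure ν ψ) :=
  ⟨by simp [edgeMeasure_apply]⟩

lemma edgeMeasure_hasLabelIn_le (ν : Measure ℝ) [IsProbabilityMeasure ν] (ψ : Measure ℕ)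
    {J : Set ℝ} (hJ : MeasurableSet J) :
    edgeMeasure ν ψ (hasLabelIn J) ≤ (∫⁻ k, (k : ℝ≥0∞) ∂ψ) * ν J := by
  rw [edgeMeasure_apply ν ψ (measurableSet_hasLabelIn hJ), ← lintegral_mul_const _ (by fun_prop)]
  refine lintegral_mono fun k => ?_
  calc Measure.pi (fun _ : Fin k => ν) {x | ⟨k, x⟩ ∈ hasLabelIn J}
      ≤ ∑ i, Measure.pi (fun _ : Fin k => ν) (Function.eval i ⁻¹' J) := by
        rw [setOf_mk_mem_hasLabelIn]
        exact measure_iUnion_fintype_le _ _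
    _ = ∑ _i : Fin k, ν J := Finset.sum_congr rfl fun i _ =>
        (measurePreserving_eval (fun _ : Fin k => ν) i).measure_preimage hJ.nullMeasurableSet
    _ = k * ν J := by simp

/-- The time window formed by two consecutive cells of the grid `d ℤ`. Consecutive windows
overlap in a cell, so that every set of times of diameter less than `d` lies in some window. -/
def window (d : ℝ) (k : ℤ) : Set ℝ := Ico (k • d) ((k + 2) • d)

lemma measurableSet_window (d : ℝ) (k : ℤ) : MeasurableSet (window d k) := measurableSet_Ico

lemma exists_subset_window {d : ℝ} {s : Set ℝ} (hfin : s.Finite) (hne : s.Nonempty)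
    (hs : ∀ x ∈ s, ∀ y ∈ s, x - y < d) : ∃ k, s ⊆ window d k := by
  obtain ⟨x₀, hx₀, hmin⟩ := exists_min_image s id hfin hne
  have hd : 0 < d := by simpa using hs x₀ hx₀ x₀ hx₀
  obtain ⟨k, hk⟩ := mem_iUnion.1 ((iUnion_Ico_zsmul hd).ge (mem_univ x₀))
  refine ⟨k, fun x hx => ⟨hk.1.trans (hmin x hx), ?_⟩⟩
  calc x < x₀ + d := by linarith [hs x hx x₀ hx₀]
    _ ≤ (k + 1) • d + d := by gcongr; exact hk.2.le
    _ = (k + 2) • d := by rw [← add_one_zsmul, add_assoc, one_add_one_eq_two]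

lemma tsum_measure_window (ν : Measure ℝ) {d : ℝ} (hd : 0 < d) :
    ∑' k, ν (window d k) = 2 * ν univ := by
  have tsum_cell : ∑' k : ℤ, ν (Ico (k • d) ((k + 1) • d)) = ν univ := by
    rw [← iUnion_Ico_zsmul hd,
      measure_iUnion (pairwise_disjoint_Ico_zsmul d) fun _ => measurableSet_Ico]
  have tsum_next_cell : ∑' k : ℤ, ν (Ico ((k + 1) • d) ((k + 1 + 1) • d)) = ν univ :=
    ((Equiv.addRight (1 : ℤ)).tsum_eq fun k => ν (Ico (k • d) ((k + 1) • d))).trans tsum_cell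
  have measure_window (k : ℤ) : ν (window d k) =
      ν (Ico (k • d) ((k + 1) • d)) + ν (Ico ((k + 1) • d) ((k + 1 + 1) • d)) := by
    rw [← measure_union Ico_disjoint_Ico_same measurableSet_Ico,
      Ico_union_Ico_eq_Ico (zsmul_le_zsmul_left hd.le (by lia))
        (zsmul_le_zsmul_left hd.le (by lia)), add_assoc]
    rfl
  simp_rw [measure_window, ENNReal.tsum_add, tsum_cell, tsum_next_cell, two_mul]

lemma measure_window_le {ν : Measure ℝ} {C : ℝ≥0} (hν : ν ≤ C • volume) (d : ℝ) (k : ℤ) :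
    ν (window d k) ≤ C * ENNReal.ofReal (2 * d) := by
  calc ν (window d k)
      ≤ C * volume (window d k) := hν (window d k)
    _ = C * ENNReal.ofReal (2 * d) := by
        rw [window, Real.volume_Ico, add_zsmul, add_sub_cancel_left, zsmul_eq_mul, Int.cast_ofNat]

section Motif

variable {U W V : Type*}

lemma mem_toTGraph [DecidableEq V] {ω : Sym2 V → LabelSpace} {e : Sym2 V} {x : ℝ} :
    x ∈ toTGraph ω e ↔ ¬ e.IsDiag ∧ ∃ i, (ω e).2 i = x := by
  by_cases he : e.IsDiag <;> simp [toTGraph, he]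

lemma Contains.of_copy {G : SimpleGraph U} {H : SimpleGraph W} (f : G.Copy H)
    {P : Sym2 W → Sym2 W → Prop} {Λ : TGraph V} {δ : ℝ} (h : Contains H P Λ δ) :
    Contains G (fun e e' => P (e.map f) (e'.map f)) Λ δ := by
  obtain ⟨Φ, hΦ, lab, hmem, hP, hdiam⟩ := h
  have map_mem {e : Sym2 U} (he : e ∈ G.edgeSet) : e.map f ∈ H.edgeSet :=
    (f.mapEdgeSet ⟨e, he⟩).2
  refine ⟨Φ ∘ f, hΦ.comp f.injective, fun e => lab (e.map f), fun e he => ?_,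
    fun _ _ h => hP _ _ h, fun e he e' he' => hdiam _ (map_mem he) _ (map_mem he')⟩
  simpa only [Sym2.map_map] using hmem _ (map_mem he)

lemma Contains.exists_window [DecidableEq V] {G : SimpleGraph U} {P : Sym2 U → Sym2 U → Prop}
    {ω : Sym2 V → LabelSpace} {d : ℝ} (h : Contains G P (toTGraph ω) d)
    (hfin : G.edgeSet.Finite) (hne : G.edgeSet.Nonempty) :
    ∃ Φ : U ↪ V, ∃ k, ∀ e ∈ G.edgeSet, ω (e.map Φ) ∈ hasLabelIn (window d k) := by
  obtain ⟨Φ, hΦ, lab, hmem, -, hdiam⟩ := h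
  obtain ⟨k, hk⟩ : ∃ k, lab '' G.edgeSet ⊆ window d k := by
    refine exists_subset_window (hfin.image lab) (hne.image lab) ?_
    rintro _ ⟨e, he, rfl⟩ _ ⟨e', he', rfl⟩
    exact hdiam e he e' he'
  refine ⟨⟨Φ, hΦ⟩, k, fun e he => ?_⟩
  obtain ⟨-, i, hi⟩ := mem_toTGraph.1 (hmem e he)
  exact ⟨i, hi ▸ hk (mem_image_of_mem lab he)⟩

lemma card_embedding_le_pow [Finite U] [Fintype V] :
    Nat.card (U ↪ V) ≤ Fintype.card V ^ Nat.card U := by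
  have := Fintype.ofFinite U
  simpa [Fintype.card_embedding_eq] using Nat.descFactorial_le_pow _ _

variable [Fintype V] [DecidableEq V] (ν : Measure ℝ) [IsProbabilityMeasure ν]
  (ψ : Measure ℕ) [IsProbabilityMeasure ψ]

lemma model_forall_hasLabelIn_le {J : Set ℝ} (hJ : MeasurableSet J) (S : Finset (Sym2 V)) :
    model V ν ψ {ω | ∀ e ∈ S, ω e ∈ hasLabelIn J} ≤
      ((∫⁻ k, (k : ℝ≥0∞) ∂ψ) * ν J) ^ S.card := by
  calc model V ν ψ {ω | ∀ e ∈ S, ω e ∈ hasLabelIn J}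
      = ∏ _e ∈ S, edgeMeasure ν ψ (hasLabelIn J) := Measure.pi_pi_finset _ _ S
    _ = edgeMeasure ν ψ (hasLabelIn J) ^ S.card := Finset.prod_const _
    _ ≤ _ := by gcongr; exact edgeMeasure_hasLabelIn_le ν ψ hJ

-- Only `m` of the `m + 1` factors `ν (J k)` are bounded by `ε`; the last one keeps the sum over
-- `k` finite.
lemma model_exists_forall_hasLabelIn_le {ι : Type*} [Countable ι] {J : ι → Set ℝ}
    (hJ : ∀ k, MeasurableSet (J k)) {ε : ℝ≥0∞} (hε : ∀ k, ν (J k) ≤ ε)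
    {S : Finset (Sym2 V)} {m : ℕ} (hS : S.card = m + 1) :
    model V ν ψ {ω | ∃ k, ∀ e ∈ S, ω e ∈ hasLabelIn (J k)} ≤
      (∫⁻ k, (k : ℝ≥0∞) ∂ψ) ^ (m + 1) * ε ^ m * ∑' k, ν (J k) := by
  rw [ofPred_exists, ← ENNReal.tsum_mul_left]
  refine (measure_iUnion_le _).trans (ENNReal.tsum_le_tsum fun k => ?_)
  calc model V ν ψ {ω | ∀ e ∈ S, ω e ∈ hasLabelIn (J k)}
      ≤ ((∫⁻ k, (k : ℝ≥0∞) ∂ψ) * ν (J k)) ^ (m + 1) :=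
        hS ▸ model_forall_hasLabelIn_le ν ψ (hJ k) S
    _ = (∫⁻ k, (k : ℝ≥0∞) ∂ψ) ^ (m + 1) * ν (J k) ^ m * ν (J k) := by ring
    _ ≤ _ := by gcongr; exact hε k

lemma model_contains_le [Finite U] (G : SimpleGraph U) (P : Sym2 U → Sym2 U → Prop)
    {C : ℝ≥0} (hν : ν ≤ C • volume) {d : ℝ} (hd : 0 < d) {m : ℕ}
    (hm : G.edgeSet.ncard = m + 1) :
    model V ν ψ {ω | Contains G P (toTGraph ω) d} ≤
      (Fintype.card V : ℝ≥0∞) ^ Nat.card U *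
        ((∫⁻ k, (k : ℝ≥0∞) ∂ψ) ^ (m + 1) * (C * ENNReal.ofReal (2 * d)) ^ m * 2) := by
  classical
  have := Fintype.ofFinite U
  have hne : G.edgeSet.Nonempty := nonempty_of_ncard_ne_zero (by lia)
  have hcover : {ω : Sym2 V → LabelSpace | Contains G P (toTGraph ω) d} ⊆
      ⋃ Φ : U ↪ V, {ω | ∃ k, ∀ e ∈ G.edgeFinset.map Φ.sym2Map,
        ω e ∈ hasLabelIn (window d k)} := fun ω hω => by
    simpa using hω.exists_window (toFinite _) hne
  have hcard (Φ : U ↪ V) : (G.edgeFinset.map Φ.sym2Map).card = m + 1 := by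
    rw [Finset.card_map, ← hm, ncard_eq_toFinset_card', SimpleGraph.edgeFinset]
  refine (measure_mono hcover).trans ((measure_iUnion_fintype_le _ _).trans ?_)
  refine (Finset.sum_le_card_nsmul _ _ _ fun Φ _ =>
    model_exists_forall_hasLabelIn_le ν ψ (measurableSet_window d) (measure_window_le hν d)
      (hcard Φ)).trans ?_
  rw [tsum_measure_window ν hd, measure_univ, mul_one, nsmul_eq_mul, Finset.card_univ,
    ← Nat.card_eq_fintype_card, ← Nat.cast_pow]
  gcongr
  exact card_embedding_le_pow

end Motif

lemma exists_subgraph_sparsity_mul_eq {VH : Type*} [Finite VH] {H : SimpleGraph VH}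
    (hH : 2 ≤ H.edgeSet.ncard) :
    ∃ (I : H.Subgraph) (m : ℕ), m ≠ 0 ∧ I.edgeSet.ncard = m + 1 ∧
      sparsity H * m = I.verts.ncard := by
  obtain ⟨I, hI, hρ⟩ : sparsity H ∈ {x : ℝ | ∃ I : H.Subgraph, 2 ≤ I.edgeSet.ncard ∧
      x = (I.verts.ncard : ℝ) / ((I.edgeSet.ncard : ℝ) - 1)} := by
    refine Set.Nonempty.csInf_mem ⟨_, ⊤, by simpa using hH, rfl⟩ ?_
    refine (finite_range fun I : H.Subgraph =>
      (I.verts.ncard : ℝ) / ((I.edgeSet.ncard : ℝ) - 1)).subset ?_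
    rintro _ ⟨I, -, rfl⟩
    exact mem_range_self I
  obtain ⟨m, hm⟩ : ∃ m, I.edgeSet.ncard = m + 1 := Nat.exists_eq_add_of_le' (by lia)
  have hm₀ : m ≠ 0 := by lia
  refine ⟨I, m, hm₀, hm, ?_⟩
  rw [hρ, hm, Nat.cast_add_one, add_sub_cancel_right, div_mul_cancel₀ _ (by exact_mod_cast hm₀)]

lemma ncard_edgeSet_coe {VH : Type*} {H : SimpleGraph VH} (I : H.Subgraph) :
    I.coe.edgeSet.ncard = I.edgeSet.ncard := by
  rw [← I.image_coe_edgeSet_coe,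
    ncard_image_of_injective _ (Sym2.map.injective Subtype.val_injective)]

lemma natCast_pow_mul_ofReal_pow_eq {d ρ : ℝ} (hd : 0 ≤ d) {m v : ℕ} (hρ : ρ * m = v) (n : ℕ) :
    (n : ℝ≥0∞) ^ v * ENNReal.ofReal d ^ m = ENNReal.ofReal (d * (n : ℝ) ^ ρ) ^ m := by
  have hpow : ENNReal.ofReal ((n : ℝ) ^ ρ) ^ m = (n : ℝ≥0∞) ^ v := by
    rw [← ENNReal.ofReal_pow (by positivity), ← Real.rpow_mul_natCast n.cast_nonneg, hρ,
      Real.rpow_natCast, ENNReal.ofReal_pow n.cast_nonneg, ENNReal.ofReal_natCast]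
  rw [ENNReal.ofReal_mul hd, mul_pow, hpow, mul_comm]

lemma exists_model_contains_le_mul_pow {VH : Type*} [Finite VH] {H : SimpleGraph VH}
    (hH : 2 ≤ H.edgeSet.ncard) (P : Sym2 VH → Sym2 VH → Prop)
    {ν : Measure ℝ} [IsProbabilityMeasure ν] {C : ℝ≥0} (hν : ν ≤ C • volume)
    {ψ : Measure ℕ} [IsProbabilityMeasure ψ] (hmean : ∫⁻ k, (k : ℝ≥0∞) ∂ψ ≠ ∞) :
    ∃ m ≠ 0, ∃ K ≠ ∞, ∀ (n : ℕ) (d : ℝ), 0 < d →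
      model (Fin n) ν ψ {ω | Contains H P (toTGraph ω) d} ≤
        K * ENNReal.ofReal (d * (n : ℝ) ^ sparsity H) ^ m := by
  obtain ⟨I, m, hm₀, hm, hρ⟩ := exists_subgraph_sparsity_mul_eq hH
  refine ⟨m, hm₀, (∫⁻ k, (k : ℝ≥0∞) ∂ψ) ^ (m + 1) * (C * 2) ^ m * 2, by finiteness,
    fun n d hd => ?_⟩
  calc model (Fin n) ν ψ {ω | Contains H P (toTGraph ω) d}
      ≤ model (Fin n) ν ψ {ω | Contains I.coe
          (fun e e' => P (e.map I.coeCopy) (e'.map I.coeCopy)) (toTGraph ω) d} :=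
        measure_mono fun _ hω => hω.of_copy I.coeCopy
    _ ≤ _ := model_contains_le ν ψ I.coe _ hν hd ((ncard_edgeSet_coe I).trans hm)
    _ = _ := by
        rw [← natCast_pow_mul_ofReal_pow_eq hd.le hρ n, Fintype.card_fin,
          ENNReal.ofReal_mul zero_le_two, ENNReal.ofReal_ofNat, Nat.card_coe_set_eq]
        ring

instance isProbabilityMeasure_unif01 : IsProbabilityMeasure unif01 := ⟨by simp [unif01]⟩

lemma unif01_le_one_smul_volume : unif01 ≤ (1 : ℝ≥0) • volume := by
  rw [one_smul]
  exact Measure.restrict_le_self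

theorem statement1_general {VH : Type*} [Finite VH] (H : SimpleGraph VH)
    (hH : 2 ≤ H.edgeSet.ncard) (P : Sym2 VH → Sym2 VH → Prop)
    (ν : Measure ℝ) [IsProbabilityMeasure ν] (C : ℝ≥0) (hν : ν ≤ C • volume)
    (ψ : Measure ℕ) [IsProbabilityMeasure ψ] (hψ : Integrable (fun k : ℕ => (k : ℝ)) ψ)
    (δ : ℕ → ℝ) (hδ : ∀ n, 0 < δ n)
    (hthr : Tendsto (fun n : ℕ => δ n * (n : ℝ) ^ sparsity H) atTop (𝓝 0)) :
    Tendsto (fun n : ℕ => model (Fin n) ν ψ {ω | Contains H P (toTGraph ω) (δ n)})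
      atTop (𝓝 0) := by
  have hmean : ∫⁻ k, (k : ℝ≥0∞) ∂ψ ≠ ∞ := by simpa using hψ.lintegral_lt_top.ne
  obtain ⟨m, hm, K, hK, hbound⟩ := exists_model_contains_le_mul_pow hH P hν hmean
  have hlim : Tendsto (fun n : ℕ => ENNReal.ofReal (δ n * (n : ℝ) ^ sparsity H) ^ m)
      atTop (𝓝 0) := by
    simpa [hm, Function.comp_def] using
      ((ENNReal.continuous_pow m).tendsto _).comp (ENNReal.tendsto_ofReal hthr)
  refine tendsto_of_tendsto_of_tendsto_of_le_of_le tendsto_const_nhds ?_ (fun _ => zero_le)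
    fun n => hbound n (δ n) (hδ n)
  simpa only [mul_zero] using ENNReal.Tendsto.const_mul hlim (.inr hK)

/-- If `δ(n)·n^{ρ_H} → 0`, then a sample of `Γ_{[n]}(ψ)` contains
`(H, P)` as a `δ(n)`-temporal motif with probability tending to `0`. -/
theorem statement1 {VH : Type} [Fintype VH] [DecidableEq VH] (H : SimpleGraph VH)
    (hH : 2 ≤ H.edgeSet.ncard)
    (P : Sym2 VH → Sym2 VH → Prop) (hP : StrictPartialOrderOn H.edgeSet P)
    (ψ : Measure ℕ) (hψ : IsLMD ψ)
    (δ : ℕ → ℝ) (hδ : ∀ n, δ n ∈ Set.Ioo (0 : ℝ) 1)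
    (hthr : Tendsto (fun n : ℕ => δ n * (n : ℝ) ^ sparsity H) atTop (𝓝 0)) :
    Tendsto (fun n : ℕ =>
        contModel (Fin n) ψ {ω | Contains H P (toTGraph ω) (δ n)})
      atTop (𝓝 0) := by
  have := hψ.1
  exact statement1_general H hH P unif01 1 unif01_le_one_smul_volume ψ hψ.2.1 δ
    (fun n => (hδ n).1) hthr

end RTG
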